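/- The ideal 𝒫_{m,n}·C_{m,n}(N) of the centralizer algebra C_{m,n}(N) is isomorphic as an algebra to the group algebra ℂ[𝔖_m × 𝔖_n] if and only if N ≥ m + n. -/

import Mathlib

open scoped BigOperators

noncomputable section

/-- Mixed tensors of valence (m,n) on an N-dimensional space, given by components. -/
abbrev Tens (N m n : ℕ) := (Fin m → Fin N) → (Fin n → Fin N) → ℂ

namespace Mixed

variable (N : ℕ)

/-- Permutation of the contravariant (V) factors. -/
def permU (m n : ℕ) (p : Equiv.Perm (Fin m)) : Module.End ℂ (Tens N m n) where
  toFun t := fun i j => t (i ∘ p) j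
  map_add' t s := rfl
  map_smul' c t := rfl

/-- Permutation of the covariant (V*) factors. -/
def permD (m n : ℕ) (q : Equiv.Perm (Fin n)) : Module.End ℂ (Tens N m n) where
  toFun t := fun i j => t i (j ∘ q)
  map_add' t s := rfl
  map_smul' c t := rfl

/-- The contraction map `tr_{ab'}` (the result, a tensor of valence (m−1,n−1), is
recorded as a function not depending on the slots a, b). -/
def ctr (m n : ℕ) (a : Fin m) (b : Fin n) : Tens N m n →ₗ[ℂ] Tens N m n where
  toFun t := fun i j => ∑ k : Fin N,
    t (Function.update i a k) (Function.update j b k)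
  map_add' t s := by funext i j; simp [Finset.sum_add_distrib]
  map_smul' c t := by funext i j; simp [Finset.mul_sum]

/-- The contraction-insertion endomorphism `τ_{ab'} = tr⁺_{ab'} ∘ tr_{ab'}`. -/
def tauC (m n : ℕ) (a : Fin m) (b : Fin n) : Module.End ℂ (Tens N m n) where
  toFun t := fun i j =>
    if i a = j b then
      ∑ k : Fin N, t (Function.update i a k) (Function.update j b k)
    else 0
  map_add' t s := by
    funext i j; by_cases h : i a = j b <;> simp [h, Finset.sum_add_distrib]
  map_smul' c t := by
    funext i j; by_cases h : i a = j b <;> simp [h, Finset.mul_sum]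

/-- `𝒜_{m,n} = ∑_{a,b'} τ_{ab'}`. -/
def A (m n : ℕ) : Module.End ℂ (Tens N m n) :=
  ∑ a : Fin m, ∑ b : Fin n, tauC N m n a b

/-- The traceless subspace: common kernel of all contractions. -/
def traceless0 (m n : ℕ) : Submodule ℂ (Tens N m n) :=
  ⨅ a : Fin m, ⨅ b : Fin n, LinearMap.ker (ctr N m n a b)

/-- `ℒ_m`: the sum of the transpositions of the V-factors. -/
def LOp (m n : ℕ) : Module.End ℂ (Tens N m n) :=
  ∑ x ∈ Finset.univ.filter (fun x : Fin m × Fin m => x.1 < x.2),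
    permU N m n (Equiv.swap x.1 x.2)

/-- `ℛ_n`: the sum of the transpositions of the V*-factors. -/
def ROp (m n : ℕ) : Module.End ℂ (Tens N m n) :=
  ∑ x ∈ Finset.univ.filter (fun x : Fin n × Fin n => x.1 < x.2),
    permD N m n (Equiv.swap x.1 x.2)

/-- The (diagonal) action of GL(N) on mixed tensors: the contragredient action on
the covariant indices. -/
def glAct (m n : ℕ) (g : GL (Fin N) ℂ) : Module.End ℂ (Tens N m n) where
  toFun t := fun i j => ∑ i' : Fin m → Fin N, ∑ j' : Fin n → Fin N,
    ((∏ a : Fin m, (g : Matrix (Fin N) (Fin N) ℂ) (i a) (i' a)) *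
      ∏ b : Fin n, ((g⁻¹ : GL (Fin N) ℂ) : Matrix (Fin N) (Fin N) ℂ) (j' b) (j b)) *
        t i' j'
  map_add' t s := by
    funext i j
    simp only [Pi.add_apply, mul_add, Finset.sum_add_distrib]
  map_smul' c t := by
    funext i j
    simp only [Pi.smul_apply, smul_eq_mul, RingHom.id_apply, Finset.mul_sum]
    refine Finset.sum_congr rfl fun i' _ => Finset.sum_congr rfl fun j' _ => by ring

/-- The centraliser algebra `C_{m,n}(N) = End_{GL(N)}(V^{m,n})`. -/
def Cent (m n : ℕ) : Subalgebra ℂ (Module.End ℂ (Tens N m n)) :=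
  Subalgebra.centralizer ℂ (Set.range (glAct N m n))

end Mixed

namespace Mixed

/-- The subspace V₁^{m,n}: the span of the images of the insertion maps (equal to
the span of the images of the operators τ_{ab'}, since the contractions are
surjective). -/
def traceSpan0 (N m n : ℕ) : Submodule ℂ (Tens N m n) :=
  ⨆ a : Fin m, ⨆ b : Fin n, LinearMap.range (tauC N m n a b)

end Mixed

/-!
Partial transposition in the `V*`-factors identifies `End(V^{m,n})` with `End(V^{⊗(m+n)})` and
`C_{m,n}(N)` with the centralizer of `GL(N)` there, which by Schur–Weyl duality is spanned by the
permutations `σ ∈ 𝔖_{m+n}`. A permutation crossing the wall becomes an operator whose image lies in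
that of some `τ_{ab'}`, so it is killed by `P`; the others are the elements of `𝔖_m × 𝔖_n`. Hence
`P·C_{m,n}(N)` is the image of the multiplicative map `r ↦ P r` from `ℂ[𝔖_m × 𝔖_n]`, and, by
comparing dimensions, it is isomorphic to `ℂ[𝔖_m × 𝔖_n]` if and only if this map is injective.

If `m + n ≤ N`, a basis tensor with pairwise distinct indices is traceless and detects every
coefficient of `r`. If `N < m + n`, the antisymmetrizer of `𝔖_{m+n}` acts by zero on
`V^{⊗(m+n)}`, so its part in `ℂ[𝔖_m × 𝔖_n]`, whose coefficient at the identity is `1`, lies in the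
kernel.
-/

namespace Mixed

section Compression

variable {k A E : Type*}

/-- Compression of an action `f` of `A` by an idempotent `P` commuting with it: the representation
`a ↦ P * f a`, which sends the unit to `P`. -/
def compression [CommSemiring k] [Semiring A] [Algebra k A] [Semiring E] [Algebra k E]
    (f : A →ₐ[k] E) {P : E} (hP : IsIdempotentElem P) (hcomm : ∀ a, Commute P (f a)) :
    A →ₙₐ[k] E where
  toFun a := P * f a
  map_smul' c a := by simp
  map_zero' := by simp
  map_add' a b := by simp [mul_add]
  map_mul' a b := by rw [map_mul, (hcomm a).symm.mul_mul_mul_comm, hP.eq]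

theorem exists_bijOn_range_iff_injective [Field k] [NonUnitalNonAssocRing A] [Module k A]
    [FiniteDimensional k A] [NonUnitalNonAssocRing E] [Module k E] (ψ : A →ₙₐ[k] E) :
    (∃ φ : E →ₗ[k] A,
      (∀ x y, x ∈ Set.range ψ → y ∈ Set.range ψ → φ (x * y) = φ x * φ y) ∧
        Set.BijOn φ (Set.range ψ) Set.univ) ↔ Function.Injective ψ := by
  let ψₗ : A →ₗ[k] E := ψ
  constructor
  · rintro ⟨φ, -, hφ⟩
    have hsurj : Function.Surjective (φ ∘ₗ ψₗ) := fun a => by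
      obtain ⟨_, ⟨b, rfl⟩, hb⟩ := hφ.surjOn (Set.mem_univ a)
      exact ⟨b, hb⟩
    exact Function.Injective.of_comp (f := φ) (LinearMap.injective_iff_surjective.2 hsurj)
  · intro hψ
    obtain ⟨φ, hφ⟩ := LinearMap.exists_leftInverse_of_injective ψₗ (LinearMap.ker_eq_bot.2 hψ)
    have hleft : Function.LeftInverse φ ψ := LinearMap.congr_fun hφ
    refine ⟨φ, ?_, fun _ _ => Set.mem_univ _, hleft.rightInvOn_range.injOn,
      fun a _ => ⟨ψ a, ⟨a, rfl⟩, hleft a⟩⟩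
    rintro _ _ ⟨a, rfl⟩ ⟨b, rfl⟩
    rw [← map_mul, hleft, hleft, hleft]

end Compression

section DoubleCentralizer

variable {k A : Type*} [CommRing k] [Ring A] [Algebra k A] [IsSemisimpleRing A]

theorem mem_range_of_commute_centralizer {W : Type*} [AddCommGroup W] [Module k W]
    [Module.Finite k W] (f : A →ₐ[k] Module.End k W) {c : Module.End k W}
    (hc : ∀ B : Module.End k W, (∀ a, Commute B (f a)) → Commute c B) : c ∈ f.range := by
  let _ : Module A W := Module.compHom W f.toRingHom
  have hsmul (a : A) (w : W) : a • w = f a w := rfl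
  have : IsScalarTower k A W := ⟨fun r a w => by simp [hsmul]⟩
  have hcomm (B : Module.End A W) (w : W) : c (B w) = B (c w) :=
    LinearMap.congr_fun (hc (B.restrictScalars k) fun a => LinearMap.ext fun v => B.map_smul a v) w
  let bicommuting : Module.End (Module.End A W) W :=
    { toFun := c, map_add' := c.map_add, map_smul' := hcomm }
  obtain ⟨s, hs⟩ := Module.Finite.fg_top (R := k) (M := W)
  obtain ⟨a, ha⟩ := jacobson_density bicommuting s
  exact ⟨a, LinearMap.ext_on hs fun w hw => (ha w hw).symm⟩

theorem mem_range_of_commute_centralizer_matrix {X : Type*} [Fintype X] [DecidableEq X]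
    (f : A →ₐ[k] Matrix X X k) {c : Matrix X X k}
    (hc : ∀ B : Matrix X X k, (∀ a, Commute B (f a)) → Commute c B) : c ∈ f.range := by
  let e : Matrix X X k ≃ₐ[k] Module.End k (X → k) := Matrix.toLinAlgEquiv'
  obtain ⟨a, ha⟩ := mem_range_of_commute_centralizer (e.toAlgHom.comp f) (c := e c) fun B hB => by
    have hBf (a : A) : Commute (e.symm B) (f a) := by simpa using (hB a).map e.symm
    simpa using (hc (e.symm B) hBf).map e
  exact ⟨a, e.injective ha⟩

end DoubleCentralizer

section TensorPower

variable {k ι α : Type*} [CommRing k] [Fintype α]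

/-- The tensor power `g ^ ⊗α` of a matrix, acting on tensors with one index per element of `α`. -/
def tensorPower (α : Type*) [Fintype α] (g : Matrix ι ι k) :
    Matrix (α → ι) (α → ι) k :=
  .of fun u w => ∏ a, g (u a) (w a)

theorem tensorPower_apply (g : Matrix ι ι k) (u w : α → ι) :
    tensorPower α g u w = ∏ a, g (u a) (w a) := rfl

theorem tensorPower_mul [Fintype ι] [DecidableEq α] (g h : Matrix ι ι k) :
    tensorPower α (g * h) = tensorPower α g * tensorPower α h := by
  ext u w
  simp only [tensorPower_apply, Matrix.mul_apply, Finset.prod_univ_sum, Fintype.piFinset_univ,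
    Finset.prod_mul_distrib]

theorem tensorPower_one [DecidableEq ι] :
    tensorPower α (1 : Matrix ι ι k) = 1 := by
  ext u w
  simp [tensorPower_apply, Matrix.one_apply, Finset.prod_ite_zero, funext_iff]

theorem tensorPower_comp_perm (g : Matrix ι ι k) (σ : Equiv.Perm α)
    (u w : α → ι) : tensorPower α g (u ∘ σ) (w ∘ σ) = tensorPower α g u w :=
  Equiv.prod_comp σ fun a => g (u a) (w a)

theorem tensorPower_elim {β : Type*} [Fintype β] (g : Matrix ι ι k) (i i' : α → ι)
    (j j' : β → ι) :
    tensorPower (α ⊕ β) g (Sum.elim i j) (Sum.elim i' j') =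
      tensorPower α g i i' * tensorPower β g j j' := by
  simp [tensorPower_apply]

variable [Fintype ι] [DecidableEq ι] [DecidableEq α]

variable (k ι) in
/-- The permutation of tensor factors, `(σ t) u = t (u ∘ σ)`, as a matrix. -/
def factorPerm : Equiv.Perm α →* Matrix (α → ι) (α → ι) k where
  toFun σ := .of fun u w => if u ∘ σ = w then 1 else 0
  map_one' := by ext u w; simp [Matrix.one_apply]
  map_mul' σ τ := by
    ext u w
    simp only [Matrix.mul_apply, Matrix.of_apply, ite_mul, one_mul, zero_mul, Finset.sum_ite_eq,
      Finset.mem_univ, if_true]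
    rfl

theorem factorPerm_apply (σ : Equiv.Perm α) (u w : α → ι) :
    factorPerm k ι σ u w = if u ∘ σ = w then 1 else 0 := rfl

theorem factorPerm_update_update (σ : Equiv.Perm α) {a : α} {u w : α → ι} (h : u (σ a) = w a)
    (c : ι) :
    factorPerm k ι σ (Function.update u (σ a) c) (Function.update w a c) =
      factorPerm k ι σ u w := by
  rw [factorPerm_apply, factorPerm_apply, Function.update_comp_eq_of_injective _ σ.injective]
  refine if_congr ⟨fun heq => ?_, fun heq => by rw [heq]⟩ rfl rfl
  ext b
  by_cases hb : b = a
  · rw [hb, Function.comp_apply, h]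
  · simpa [hb] using congrFun heq b

theorem apply_comp_of_commute_factorPerm {B : Matrix (α → ι) (α → ι) k} {σ : Equiv.Perm α}
    (hB : Commute B (factorPerm k ι σ)) (u w : α → ι) : B (u ∘ σ) (w ∘ σ) = B u w := by
  have h := congrFun (congrFun hB.eq u) (w ∘ σ)
  simpa [Matrix.mul_apply, factorPerm_apply, σ.surjective.injective_comp_right.eq_iff] using h.symm

variable (k ι α) in
/-- The action of the group algebra of the symmetric group on the tensor power. -/
def factorPermAlg : MonoidAlgebra k (Equiv.Perm α) →ₐ[k] Matrix (α → ι) (α → ι) k :=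
  MonoidAlgebra.lift k _ _ (factorPerm k ι)

theorem factorPermAlg_apply (r : MonoidAlgebra k (Equiv.Perm α)) :
    factorPermAlg k ι α r = ∑ σ, r.coeff σ • factorPerm k ι σ := by
  rw [factorPermAlg, MonoidAlgebra.lift_apply, Finsupp.sum_fintype _ _ (by simp)]

variable (k α) in
/-- The antisymmetrizer `∑ σ, sign σ • σ`. -/
def alternator : MonoidAlgebra k (Equiv.Perm α) :=
  .ofCoeff (Finsupp.equivFunOnFinite.symm fun σ => ((Equiv.Perm.sign σ : ℤ) : k))

theorem alternator_coeff (σ : Equiv.Perm α) :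
    (alternator k α).coeff σ = ((Equiv.Perm.sign σ : ℤ) : k) := rfl

-- The `(u, w)` entry is the determinant of the matrix `(δ (u a) (w b))`, which has two equal rows.
theorem factorPermAlg_alternator (h : Fintype.card ι < Fintype.card α) :
    factorPermAlg k ι α (alternator k α) = 0 := by
  ext u w
  obtain ⟨a, b, hab, huab⟩ := Fintype.exists_ne_map_eq_of_card_lt u h
  let M : Matrix α α k := .of fun a b => if u a = w b then 1 else 0
  calc factorPermAlg k ι α (alternator k α) u w = M.det := by
        simp [factorPermAlg_apply, alternator_coeff, Matrix.sum_apply, factorPerm_apply,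
          Matrix.det_apply, M, Finset.prod_ite_zero, funext_iff, Units.smul_def]
    _ = 0 := Matrix.det_zero_of_row_eq hab (by ext c; simp [M, huab])

end TensorPower

section SchurWeyl

variable {k ι α : Type*} [Fintype α]

theorem exists_perm_of_sum_single_eq {Y : Type*} {z z' : α → Y}
    (h : ∑ a, Finsupp.single (z a) 1 = ∑ a, Finsupp.single (z' a) (1 : ℕ)) :
    ∃ σ : Equiv.Perm α, z' ∘ σ = z := by
  classical
  have fiberEquiv (y : Y) : Nonempty ({a // z a = y} ≃ {a // z' a = y}) := by
    rw [← Fintype.card_eq, Fintype.card_subtype, Fintype.card_subtype]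
    simpa [Finsupp.finsetSum_apply, Finsupp.single_apply] using DFunLike.congr_fun h y
  exact ⟨Equiv.ofFiberEquiv fun y => (fiberEquiv y).some, funext (Equiv.ofFiberEquiv_map _)⟩

/-- The exponent of the monomial `∏ a, X (u a, w a)` in the entries of a generic matrix. -/
def pairExponent (u w : α → ι) : ι × ι →₀ ℕ := ∑ a, Finsupp.single (u a, w a) 1

theorem exists_eq_pairExponent [Nonempty k] {B : Matrix (α → ι) (α → ι) k}
    (hB : ∀ (σ : Equiv.Perm α) u w, B (u ∘ σ) (w ∘ σ) = B u w) :
    ∃ b : (ι × ι →₀ ℕ) → k, ∀ u w, B u w = b (pairExponent u w) := by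
  have hfactors : Function.FactorsThrough (fun x : (α → ι) × (α → ι) => B x.1 x.2)
      (fun x => pairExponent x.1 x.2) := by
    rintro ⟨u, w⟩ ⟨u', w'⟩ h
    obtain ⟨σ, hσ⟩ := exists_perm_of_sum_single_eq h
    obtain rfl : u' ∘ σ = u := funext fun a => congrArg Prod.fst (congrFun hσ a)
    obtain rfl : w' ∘ σ = w := funext fun a => congrArg Prod.snd (congrFun hσ a)
    exact hB σ u' w'
  obtain ⟨b, hb⟩ := (Function.factorsThrough_iff _).1 hfactors
  exact ⟨b, fun u w => congrFun hb (u, w)⟩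

section

variable [CommRing k]

theorem dual_apply_eq_sum_single {X Y : Type*} [Fintype X] [Fintype Y] [DecidableEq X]
    [DecidableEq Y] (f : Module.Dual k (Matrix X Y k)) (M : Matrix X Y k) :
    f M = ∑ u, ∑ w, M u w * f (Matrix.single u w 1) := by
  conv_lhs => rw [Matrix.matrix_eq_sum_single M]
  simp only [map_sum]
  refine Finset.sum_congr rfl fun u _ => Finset.sum_congr rfl fun w _ => ?_
  rw [← smul_eq_mul, ← map_smul, Matrix.smul_single, smul_eq_mul, mul_one]

theorem eval_monomial_pairExponent (g : Matrix ι ι k) (u w : α → ι) (c : k) :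
    MvPolynomial.eval (fun x : ι × ι => g x.1 x.2) (MvPolynomial.monomial (pairExponent u w) c) =
      tensorPower α g u w * c := by
  rw [MvPolynomial.eval_monomial, pairExponent, ← Finsupp.prod_finsetSum_index (by simp)
    (by simp [pow_add]), mul_comm]
  simp [tensorPower_apply]

variable [Fintype ι] [DecidableEq ι] [DecidableEq α]

/-- The polynomial in the entries of a matrix `g` whose value is `f (g ^ ⊗α)`. -/
def tensorPowerPolynomial (f : Module.Dual k (Matrix (α → ι) (α → ι) k)) :
    MvPolynomial (ι × ι) k :=
  ∑ u, ∑ w, MvPolynomial.monomial (pairExponent u w) (f (Matrix.single u w 1))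

theorem eval_tensorPowerPolynomial (f : Module.Dual k (Matrix (α → ι) (α → ι) k))
    (g : Matrix ι ι k) :
    MvPolynomial.eval (fun x : ι × ι => g x.1 x.2) (tensorPowerPolynomial f) =
      f (tensorPower α g) := by
  simp only [tensorPowerPolynomial, dual_apply_eq_sum_single f (tensorPower α g), map_sum,
    eval_monomial_pairExponent]

end

variable [Field k] [Infinite k] [Fintype ι] [DecidableEq ι]

-- If `f` vanishes on all `g ^ ⊗α`, its polynomial is zero; and since `B u w` depends only on the
-- monomial of `(u, w)`, `f B` is a linear function of that polynomial.
theorem mem_span_tensorPower {B : Matrix (α → ι) (α → ι) k}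
    (hB : ∀ (σ : Equiv.Perm α) u w, B (u ∘ σ) (w ∘ σ) = B u w) :
    B ∈ Submodule.span k (Set.range fun g : GL ι k => tensorPower α (g : Matrix ι ι k)) := by
  classical
  by_contra hmem
  obtain ⟨f, hfB, hf⟩ := Submodule.exists_dual_map_eq_bot_of_notMem hmem inferInstance
  have hpoly : tensorPowerPolynomial f = 0 := MvPolynomial.eq_of_eval_eq_on_gl fun g => by
    rw [eval_tensorPowerPolynomial, map_zero]
    exact LinearMap.le_ker_iff_map.2 hf (Submodule.subset_span ⟨g, rfl⟩)
  obtain ⟨b, hb⟩ := exists_eq_pairExponent hB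
  have hconstr (e : ι × ι →₀ ℕ) (c : k) :
      (MvPolynomial.basisMonomials (ι × ι) k).constr k b (MvPolynomial.monomial e c) = b e * c := by
    have hmonomial : MvPolynomial.monomial e c = c • MvPolynomial.basisMonomials (ι × ι) k e := by
      simp [MvPolynomial.smul_monomial]
    rw [hmonomial, map_smul, Module.Basis.constr_basis, smul_eq_mul, mul_comm]
  apply hfB
  calc f B = (MvPolynomial.basisMonomials (ι × ι) k).constr k b (tensorPowerPolynomial f) := by
        simp only [tensorPowerPolynomial, map_sum, dual_apply_eq_sum_single f B, hb, hconstr]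
    _ = 0 := by rw [hpoly, map_zero]

theorem mem_range_factorPermAlg [DecidableEq α] [NeZero (Nat.card (Equiv.Perm α) : k)]
    {K : Matrix (α → ι) (α → ι) k}
    (hK : ∀ g : GL ι k, Commute K (tensorPower α (g : Matrix ι ι k))) :
    K ∈ (factorPermAlg k ι α).range := by
  refine mem_range_of_commute_centralizer_matrix _ fun B hB => ?_
  have hBσ (σ : Equiv.Perm α) : Commute B (factorPerm k ι σ) := by
    simpa [factorPermAlg] using hB (MonoidAlgebra.of k _ σ)
  have hspan_le : Submodule.span k (Set.range fun g : GL ι k => tensorPower α (g : Matrix ι ι k)) ≤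
      (Subalgebra.centralizer k {K}).toSubmodule :=
    Submodule.span_le.2 (by rintro _ ⟨g, rfl⟩; simpa [Set.mem_centralizer_iff] using (hK g).eq)
  have hBK := hspan_le (mem_span_tensorPower fun σ => apply_comp_of_commute_factorPerm (hBσ σ))
  exact (Subalgebra.mem_centralizer_iff k).1 hBK K rfl

end SchurWeyl

section Wall

variable {k α β : Type*}

theorem mem_range_sumCongrHom_of_forall_ne [Finite α] [Finite β] {σ : Equiv.Perm (α ⊕ β)}
    (h : ∀ a b, σ (Sum.inr b) ≠ Sum.inl a) :
    σ ∈ (Equiv.Perm.sumCongrHom α β).range := by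
  apply Equiv.Perm.mem_sumCongrHom_range_of_perm_mapsTo_inl
  rw [Equiv.Perm.perm_mapsTo_inl_iff_mapsTo_inr]
  rintro _ ⟨b, rfl⟩
  rcases hσ : σ (Sum.inr b) with a | b'
  · exact absurd hσ (h a b)
  · exact ⟨b', rfl⟩

theorem sumCongr_inv_injective : Function.Injective
    fun x : Equiv.Perm α × Equiv.Perm β => Equiv.sumCongr x.1 x.2⁻¹ := by
  rintro ⟨p, q⟩ ⟨p', q'⟩ h
  simpa using Equiv.Perm.sumCongrHom_injective (a₁ := (p, q⁻¹)) (a₂ := (p', q'⁻¹)) h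

/-- The restriction of `r` to the permutations that do not cross the wall between `α` and `β`. The
second component is inverted because transposition inverts the permutations of the `V*`-factors. -/
def wallPart [Finite α] [Finite β] [Semiring k] (r : MonoidAlgebra k (Equiv.Perm (α ⊕ β))) :
    MonoidAlgebra k (Equiv.Perm α × Equiv.Perm β) :=
  .ofCoeff (Finsupp.equivFunOnFinite.symm fun x => r.coeff (Equiv.sumCongr x.1 x.2⁻¹))

theorem wallPart_coeff [Finite α] [Finite β] [Semiring k]
    (r : MonoidAlgebra k (Equiv.Perm (α ⊕ β))) (x : Equiv.Perm α × Equiv.Perm β) :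
    (wallPart r).coeff x = r.coeff (Equiv.sumCongr x.1 x.2⁻¹) := rfl

theorem wallPart_alternator_ne_zero [Fintype α] [Fintype β] [DecidableEq α] [DecidableEq β]
    [CommRing k] [Nontrivial k] :
    wallPart (alternator k (α ⊕ β)) ≠ 0 := by
  intro h
  have hcoeff := congrArg (fun r => r.coeff 1) h
  simp [wallPart_coeff, alternator_coeff] at hcoeff

end Wall

section MixedTensors

variable {N m n : ℕ}

/-- The operator on mixed tensors whose matrix is the partial transpose of `K` in the `V*`-factors:
the permutation `factorPerm σ` becomes the operator of a walled Brauer diagram. -/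
def transposedOp (N m n : ℕ) :
    Matrix (Fin m ⊕ Fin n → Fin N) (Fin m ⊕ Fin n → Fin N) ℂ →ₗ[ℂ] Module.End ℂ (Tens N m n) :=
  LinearMap.mk₂ ℂ (fun K t i j => ∑ i', ∑ j', K (Sum.elim i j') (Sum.elim i' j) * t i' j')
    (fun _ _ _ => by ext; simp [add_mul, Finset.sum_add_distrib])
    (fun _ _ _ => by ext; simp [Finset.mul_sum, mul_assoc])
    (fun _ _ _ => by ext; simp [mul_add, Finset.sum_add_distrib])
    (fun _ _ _ => by ext; simp [Finset.mul_sum, mul_left_comm])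

theorem transposedOp_apply (K : Matrix (Fin m ⊕ Fin n → Fin N) (Fin m ⊕ Fin n → Fin N) ℂ)
    (t : Tens N m n) (i : Fin m → Fin N) (j : Fin n → Fin N) :
    transposedOp N m n K t i j = ∑ i', ∑ j', K (Sum.elim i j') (Sum.elim i' j) * t i' j' := rfl

/-- The basis tensor with component `1` at the multi-index `(i₀, j₀)`. -/
def basisTensor (i₀ : Fin m → Fin N) (j₀ : Fin n → Fin N) : Tens N m n :=
  fun i j => if i = i₀ ∧ j = j₀ then 1 else 0

theorem basisTensor_apply (i₀ i : Fin m → Fin N) (j₀ j : Fin n → Fin N) :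
    basisTensor i₀ j₀ i j = if i = i₀ ∧ j = j₀ then 1 else 0 := rfl

theorem eq_sum_smul_basisTensor (t : Tens N m n) : t = ∑ i, ∑ j, t i j • basisTensor i j := by
  ext i j
  simp [Finset.sum_apply, basisTensor_apply, ite_and]

theorem transposedOp_surjective : Function.Surjective (transposedOp N m n) := by
  intro c
  refine ⟨.of fun u w => c (basisTensor (w ∘ Sum.inl) (u ∘ Sum.inr)) (u ∘ Sum.inl) (w ∘ Sum.inr),
    LinearMap.ext fun t => ?_⟩
  ext i j
  rw [transposedOp_apply]
  conv_rhs => rw [eq_sum_smul_basisTensor t]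
  simp [Finset.sum_apply, mul_comm]

theorem glAct_eq_mul (g : GL (Fin N) ℂ) (t : Tens N m n) :
    Matrix.of (glAct N m n g t) = tensorPower (Fin m) (g : Matrix (Fin N) (Fin N) ℂ) *
      Matrix.of t * tensorPower (Fin n) ((g⁻¹ : GL (Fin N) ℂ) : Matrix (Fin N) (Fin N) ℂ) := by
  ext i j
  simp only [glAct, LinearMap.coe_mk, AddHom.coe_mk, tensorPower, Matrix.mul_apply,
    Matrix.of_apply, Finset.sum_mul]
  rw [Finset.sum_comm]
  refine Finset.sum_congr rfl fun j' _ => Finset.sum_congr rfl fun i' _ => ?_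
  ring

theorem glAct_mul_tensorPower (g : GL (Fin N) ℂ) (t : Tens N m n) :
    Matrix.of (glAct N m n g t) * tensorPower (Fin n) g.val =
      tensorPower (Fin m) g.val * Matrix.of t := by
  rw [glAct_eq_mul, Matrix.mul_assoc, ← tensorPower_mul, Units.inv_mul, tensorPower_one,
    Matrix.mul_one]

theorem glAct_of_mul_tensorPower (g : GL (Fin N) ℂ) (t : Tens N m n) :
    glAct N m n g (Matrix.of.symm (Matrix.of t * tensorPower (Fin n) g.val)) =
      Matrix.of.symm (tensorPower (Fin m) g.val * Matrix.of t) := by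
  apply Matrix.of.injective
  rw [glAct_eq_mul, Equiv.apply_symm_apply, Equiv.apply_symm_apply, Matrix.mul_assoc,
    Matrix.mul_assoc, ← tensorPower_mul, Units.mul_inv, tensorPower_one, Matrix.mul_one]

theorem sum_sumArrow {α β X M : Type*} [Fintype α] [Fintype β] [DecidableEq α] [DecidableEq β]
    [Fintype X] [AddCommMonoid M] (f : (α ⊕ β → X) → M) :
    ∑ u, f u = ∑ i : α → X, ∑ j : β → X, f (Sum.elim i j) := by
  rw [← (Equiv.sumArrowEquivProdArrow α β X).symm.sum_comp, Fintype.sum_prod_type]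
  rfl

theorem mul_tensorPower_elim (K : Matrix (Fin m ⊕ Fin n → Fin N) (Fin m ⊕ Fin n → Fin N) ℂ)
    (g : Matrix (Fin N) (Fin N) ℂ) (i i' : Fin m → Fin N) (j j' : Fin n → Fin N) :
    (K * tensorPower (Fin m ⊕ Fin n) g) (Sum.elim i j) (Sum.elim i' j') =
      (Matrix.of (transposedOp N m n K (Matrix.of.symm
        (tensorPower (Fin m) g * Matrix.of (basisTensor i' j)))) * tensorPower (Fin n) g) i j' := by
  rw [Matrix.mul_apply, sum_sumArrow, Finset.sum_comm, Matrix.mul_apply]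
  refine Finset.sum_congr rfl fun y _ => ?_
  simp [transposedOp_apply, tensorPower_elim, Finset.sum_mul, Matrix.mul_apply, basisTensor_apply,
    ite_and, mul_assoc]

theorem tensorPower_mul_elim (K : Matrix (Fin m ⊕ Fin n → Fin N) (Fin m ⊕ Fin n → Fin N) ℂ)
    (g : Matrix (Fin N) (Fin N) ℂ) (i i' : Fin m → Fin N) (j j' : Fin n → Fin N) :
    (tensorPower (Fin m ⊕ Fin n) g * K) (Sum.elim i j) (Sum.elim i' j') =
      (tensorPower (Fin m) g * Matrix.of (transposedOp N m n K (Matrix.of.symm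
        (Matrix.of (basisTensor i' j) * tensorPower (Fin n) g)))) i j' := by
  rw [Matrix.mul_apply, sum_sumArrow, Matrix.mul_apply]
  refine Finset.sum_congr rfl fun x _ => ?_
  simp [transposedOp_apply, tensorPower_elim, Finset.mul_sum, Matrix.mul_apply, basisTensor_apply,
    ite_and, mul_assoc, mul_comm]

theorem commute_tensorPower_of_commute_glAct {g : GL (Fin N) ℂ}
    {K : Matrix (Fin m ⊕ Fin n → Fin N) (Fin m ⊕ Fin n → Fin N) ℂ}
    (h : Commute (transposedOp N m n K) (glAct N m n g)) :
    Commute K (tensorPower (Fin m ⊕ Fin n) (g : Matrix (Fin N) (Fin N) ℂ)) := by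
  ext u w
  rw [← Sum.elim_comp_inl_inr u, ← Sum.elim_comp_inl_inr w, mul_tensorPower_elim,
    tensorPower_mul_elim, ← glAct_of_mul_tensorPower, ← glAct_mul_tensorPower]
  exact congrArg (fun s => (Matrix.of s * tensorPower (Fin n) g.val) (u ∘ Sum.inl) (w ∘ Sum.inr))
    (LinearMap.congr_fun h.eq _)

theorem exists_eq_transposedOp_of_mem_cent {c : Module.End ℂ (Tens N m n)} (hc : c ∈ Cent N m n) :
    ∃ r, c = transposedOp N m n (factorPermAlg ℂ (Fin N) (Fin m ⊕ Fin n) r) := by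
  obtain ⟨K, rfl⟩ := transposedOp_surjective c
  obtain ⟨r, rfl⟩ := mem_range_factorPermAlg fun g => commute_tensorPower_of_commute_glAct
    ((Subalgebra.mem_centralizer_iff ℂ).1 hc _ ⟨g, rfl⟩).symm
  exact ⟨r, rfl⟩

/-- The action of `𝔖_m × 𝔖_n` by separate permutations of the `V`- and the `V*`-factors. -/
def permAct (N m n : ℕ) :
    Equiv.Perm (Fin m) × Equiv.Perm (Fin n) →* Module.End ℂ (Tens N m n) where
  toFun x := permU N m n x.1 * permD N m n x.2
  map_one' := rfl
  map_mul' _ _ := rfl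

theorem permAct_apply (x : Equiv.Perm (Fin m) × Equiv.Perm (Fin n)) (t : Tens N m n)
    (i : Fin m → Fin N) (j : Fin n → Fin N) :
    permAct N m n x t i j = t (i ∘ x.1) (j ∘ x.2) := rfl

theorem permAct_mem_cent (x : Equiv.Perm (Fin m) × Equiv.Perm (Fin n)) :
    permAct N m n x ∈ Cent N m n := by
  rw [Cent, Subalgebra.mem_centralizer_iff]
  rintro _ ⟨g, rfl⟩
  refine LinearMap.ext fun t => Matrix.of.injective ?_
  let e₁ : (Fin m → Fin N) ≃ (Fin m → Fin N) := x.1.symm.arrowCongr (.refl _)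
  let e₂ : (Fin n → Fin N) ≃ (Fin n → Fin N) := x.2.symm.arrowCongr (.refl _)
  have hsubmatrix (s : Tens N m n) :
      Matrix.of (permAct N m n x s) = (Matrix.of s).submatrix e₁ e₂ := rfl
  have h₁ (g : Matrix (Fin N) (Fin N) ℂ) :
      (tensorPower (Fin m) g).submatrix e₁ e₁ = tensorPower (Fin m) g :=
    Matrix.ext (tensorPower_comp_perm g x.1)
  have h₂ (g : Matrix (Fin N) (Fin N) ℂ) :
      (tensorPower (Fin n) g).submatrix e₂ e₂ = tensorPower (Fin n) g :=
    Matrix.ext (tensorPower_comp_perm g x.2)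
  rw [Module.End.mul_apply, Module.End.mul_apply, glAct_eq_mul, hsubmatrix, hsubmatrix,
    glAct_eq_mul, ← Matrix.submatrix_mul_equiv _ _ e₁ e₂ e₂,
    ← Matrix.submatrix_mul_equiv _ _ e₁ e₁ e₂, h₁, h₂]

theorem ctr_permAct (x : Equiv.Perm (Fin m) × Equiv.Perm (Fin n)) (a : Fin m) (b : Fin n)
    (t : Tens N m n) :
    ctr N m n (x.1 a) (x.2 b) (permAct N m n x t) = permAct N m n x (ctr N m n a b t) := by
  ext i j
  simp [ctr, permAct_apply, Function.update_comp_eq_of_injective, x.1.injective, x.2.injective]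

theorem tauC_permAct (x : Equiv.Perm (Fin m) × Equiv.Perm (Fin n)) (a : Fin m) (b : Fin n)
    (t : Tens N m n) :
    tauC N m n (x.1 a) (x.2 b) (permAct N m n x t) = permAct N m n x (tauC N m n a b t) := by
  ext i j
  simp [tauC, permAct_apply, Function.update_comp_eq_of_injective, x.1.injective, x.2.injective]

theorem mem_traceless0 {t : Tens N m n} : t ∈ traceless0 N m n ↔ ∀ a b, ctr N m n a b t = 0 := by
  simp [traceless0]

theorem tauC_mem_traceSpan0 (a : Fin m) (b : Fin n) (t : Tens N m n) :
    tauC N m n a b t ∈ traceSpan0 N m n :=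
  Submodule.mem_iSup_of_mem a (Submodule.mem_iSup_of_mem b ⟨t, rfl⟩)

theorem permAct_mem_traceless0 (x : Equiv.Perm (Fin m) × Equiv.Perm (Fin n)) {t : Tens N m n}
    (ht : t ∈ traceless0 N m n) : permAct N m n x t ∈ traceless0 N m n := by
  rw [mem_traceless0] at ht ⊢
  rw [x.1.surjective.forall]
  intro a
  rw [x.2.surjective.forall]
  intro b
  rw [ctr_permAct, ht, map_zero]

theorem traceSpan0_le_comap_permAct (x : Equiv.Perm (Fin m) × Equiv.Perm (Fin n)) :
    traceSpan0 N m n ≤ (traceSpan0 N m n).comap (permAct N m n x) := by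
  refine iSup₂_le fun a b => ?_
  rintro _ ⟨t, rfl⟩
  rw [Submodule.mem_comap, ← tauC_permAct]
  exact tauC_mem_traceSpan0 _ _ _

variable (N m n) in
/-- The action of the group algebra `ℂ[𝔖_m × 𝔖_n]` on mixed tensors. -/
def groupAct : MonoidAlgebra ℂ (Equiv.Perm (Fin m) × Equiv.Perm (Fin n)) →ₐ[ℂ]
    Module.End ℂ (Tens N m n) :=
  MonoidAlgebra.lift ℂ _ _ (permAct N m n)

theorem groupAct_eq_sum (r : MonoidAlgebra ℂ (Equiv.Perm (Fin m) × Equiv.Perm (Fin n))) :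
    groupAct N m n r = ∑ x, r.coeff x • permAct N m n x := by
  rw [groupAct, MonoidAlgebra.lift_apply, Finsupp.sum_fintype _ _ (by simp)]

theorem groupAct_mem_cent (r : MonoidAlgebra ℂ (Equiv.Perm (Fin m) × Equiv.Perm (Fin n))) :
    groupAct N m n r ∈ Cent N m n := by
  rw [groupAct_eq_sum]
  exact Subalgebra.sum_mem _ fun x _ => Subalgebra.smul_mem _ (permAct_mem_cent x) _

theorem commute_groupAct {P : Module.End ℂ (Tens N m n)} (hidem : IsIdempotentElem P)
    (hrange : LinearMap.range P = traceless0 N m n) (hker : LinearMap.ker P = traceSpan0 N m n)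
    (r : MonoidAlgebra ℂ (Equiv.Perm (Fin m) × Equiv.Perm (Fin n))) :
    Commute P (groupAct N m n r) := by
  rw [groupAct_eq_sum]
  refine Commute.sum_right _ _ _ fun x _ => Commute.smul_right ?_ _
  rw [LinearMap.IsIdempotentElem.commute_iff hidem, hrange, hker]
  exact ⟨fun t ht => permAct_mem_traceless0 x ht, traceSpan0_le_comap_permAct x⟩

theorem tauC_transposedOp_factorPerm {σ : Equiv.Perm (Fin m ⊕ Fin n)} {a : Fin m} {b : Fin n}
    (h : σ (Sum.inr b) = Sum.inl a) (t : Tens N m n) :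
    tauC N m n a b (transposedOp N m n (factorPerm ℂ (Fin N) σ) t) =
      (N : ℂ) • transposedOp N m n (factorPerm ℂ (Fin N) σ) t := by
  ext i j
  by_cases hij : i a = j b
  · have hupdate (k : Fin N) : transposedOp N m n (factorPerm ℂ (Fin N) σ) t
        (Function.update i a k) (Function.update j b k) =
          transposedOp N m n (factorPerm ℂ (Fin N) σ) t i j := by
      simp only [transposedOp_apply]
      refine Finset.sum_congr rfl fun i' _ => Finset.sum_congr rfl fun j' _ => ?_
      rw [Sum.elim_update_left, Sum.elim_update_right, ← h, factorPerm_update_update]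
      simpa [h] using hij
    simp [tauC, hij, hupdate]
  · have hzero : transposedOp N m n (factorPerm ℂ (Fin N) σ) t i j = 0 := by
      refine Finset.sum_eq_zero fun i' _ => Finset.sum_eq_zero fun j' _ => ?_
      rw [factorPerm_apply, if_neg, zero_mul]
      exact fun heq => hij (by simpa [h] using congrFun heq (Sum.inr b))
    simp [tauC, hij, hzero]

theorem transposedOp_factorPerm_mem_traceSpan0 (hN : N ≠ 0) {σ : Equiv.Perm (Fin m ⊕ Fin n)}
    {a : Fin m} {b : Fin n} (h : σ (Sum.inr b) = Sum.inl a) (t : Tens N m n) :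
    transposedOp N m n (factorPerm ℂ (Fin N) σ) t ∈ traceSpan0 N m n := by
  rw [← Submodule.smul_mem_iff _ (Nat.cast_ne_zero.2 hN : (N : ℂ) ≠ 0),
    ← tauC_transposedOp_factorPerm h]
  exact tauC_mem_traceSpan0 _ _ _

theorem transposedOp_factorPerm_sumCongr (p : Equiv.Perm (Fin m)) (q : Equiv.Perm (Fin n)) :
    transposedOp N m n (factorPerm ℂ (Fin N) (Equiv.sumCongr p q⁻¹)) = permAct N m n (p, q) := by
  have hentry (i i' : Fin m → Fin N) (j j' : Fin n → Fin N) :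
      Sum.elim i j' ∘ Equiv.sumCongr p q⁻¹ = Sum.elim i' j ↔ i ∘ p = i' ∧ j ∘ q = j' := by
    change Sum.elim i j' ∘ Sum.map p q.symm = _ ↔ _
    rw [Sum.elim_comp_map, Sum.elim_eq_iff, Equiv.comp_symm_eq, eq_comm (a := j')]
  ext t i j
  simp [transposedOp_apply, factorPerm_apply, hentry, ite_and, permAct_apply]

theorem mul_transposedOp_factorPermAlg (hN : N ≠ 0) {P : Module.End ℂ (Tens N m n)}
    (hker : LinearMap.ker P = traceSpan0 N m n)
    (r : MonoidAlgebra ℂ (Equiv.Perm (Fin m ⊕ Fin n))) :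
    P * transposedOp N m n (factorPermAlg ℂ (Fin N) _ r) = P * groupAct N m n (wallPart r) := by
  rw [factorPermAlg_apply, groupAct_eq_sum, map_sum, Finset.mul_sum, Finset.mul_sum, eq_comm]
  refine Fintype.sum_of_injective _ sumCongr_inv_injective _ _ ?_ ?_
  · intro σ hσ
    obtain ⟨a, b, hab⟩ : ∃ a b, σ (Sum.inr b) = Sum.inl a := by
      by_contra! hnot
      obtain ⟨x, rfl⟩ := mem_range_sumCongrHom_of_forall_ne hnot
      exact hσ ⟨(x.1, x.2⁻¹), by simp [Equiv.Perm.sumCongrHom]⟩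
    have hzero : P * transposedOp N m n (factorPerm ℂ (Fin N) σ) = 0 :=
      LinearMap.ext fun t => hker.ge (transposedOp_factorPerm_mem_traceSpan0 hN hab t)
    rw [map_smul, mul_smul_comm, hzero, smul_zero]
  · intro x
    rw [wallPart_coeff, map_smul, transposedOp_factorPerm_sumCongr]

theorem basisTensor_mem_traceless0 {i₀ : Fin m → Fin N} {j₀ : Fin n → Fin N}
    (h : ∀ a b, i₀ a ≠ j₀ b) : basisTensor i₀ j₀ ∈ traceless0 N m n := by
  rw [mem_traceless0]
  intro a b
  have hzero (i : Fin m → Fin N) (j : Fin n → Fin N) (k : Fin N) :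
      basisTensor i₀ j₀ (Function.update i a k) (Function.update j b k) = 0 := by
    refine if_neg ?_
    rintro ⟨hi, hj⟩
    exact h a b (by rw [← hi, ← hj, Function.update_self, Function.update_self])
  ext i j
  simp [ctr, hzero]

theorem comp_symm_comp_eq_self_iff {α X : Type*} {u : α → X} (hu : Function.Injective u)
    {p q : Equiv.Perm α} : (u ∘ p.symm) ∘ q = u ↔ q = p := by
  rw [Function.comp_assoc, hu.comp_left.eq_iff' (Function.comp_id u), Equiv.symm_comp_eq,
    Function.comp_id, DFunLike.coe_fn_eq]

theorem groupAct_basisTensor_apply {i₀ : Fin m → Fin N} {j₀ : Fin n → Fin N}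
    (hi₀ : Function.Injective i₀) (hj₀ : Function.Injective j₀)
    (r : MonoidAlgebra ℂ (Equiv.Perm (Fin m) × Equiv.Perm (Fin n)))
    (x : Equiv.Perm (Fin m) × Equiv.Perm (Fin n)) :
    groupAct N m n r (basisTensor i₀ j₀) (i₀ ∘ x.1.symm) (j₀ ∘ x.2.symm) = r.coeff x := by
  simp [groupAct_eq_sum, permAct_apply, basisTensor_apply, Finset.sum_apply,
    comp_symm_comp_eq_self_iff hi₀, comp_symm_comp_eq_self_iff hj₀, ← Prod.ext_iff]

theorem eq_zero_of_mul_groupAct_eq_zero (h : m + n ≤ N) {P : Module.End ℂ (Tens N m n)}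
    (hidem : IsIdempotentElem P) (hrange : LinearMap.range P = traceless0 N m n)
    {r : MonoidAlgebra ℂ (Equiv.Perm (Fin m) × Equiv.Perm (Fin n))}
    (hcomm : Commute P (groupAct N m n r)) (hr : P * groupAct N m n r = 0) : r = 0 := by
  let i₀ : Fin m → Fin N := Fin.castLE h ∘ Fin.castAdd n
  let j₀ : Fin n → Fin N := Fin.castLE h ∘ Fin.natAdd m
  have hi₀ : Function.Injective i₀ :=
    (Fin.castLE_injective h).comp (Fin.castAdd_injective m n)
  have hj₀ : Function.Injective j₀ :=
    (Fin.castLE_injective h).comp (Fin.natAdd_injective n m)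
  have hdisjoint (a : Fin m) (b : Fin n) : i₀ a ≠ j₀ b :=
    Fin.ne_of_lt (a.isLt.trans_le (Nat.le_add_right m b))
  have hP : P (basisTensor i₀ j₀) = basisTensor i₀ j₀ :=
    (LinearMap.IsIdempotentElem.mem_range_iff hidem).1
      (hrange.ge (basisTensor_mem_traceless0 hdisjoint))
  have hzero : groupAct N m n r (basisTensor i₀ j₀) = 0 := by
    rw [← hP, ← Module.End.mul_apply, ← hcomm.eq, hr, LinearMap.zero_apply]
  ext x
  rw [← groupAct_basisTensor_apply hi₀ hj₀ r x, hzero]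
  rfl

section Projector

variable {P : Module.End ℂ (Tens N m n)} (hidem : IsIdempotentElem P)
  (hrange : LinearMap.range P = traceless0 N m n) (hker : LinearMap.ker P = traceSpan0 N m n)

/-- The representation `r ↦ P * r` of `ℂ[𝔖_m × 𝔖_n]` by operators supported on the traceless
subspace. -/
def tracelessAct : MonoidAlgebra ℂ (Equiv.Perm (Fin m) × Equiv.Perm (Fin n)) →ₙₐ[ℂ]
    Module.End ℂ (Tens N m n) :=
  compression (groupAct N m n) hidem (commute_groupAct hidem hrange hker)

theorem tracelessAct_apply (r : MonoidAlgebra ℂ (Equiv.Perm (Fin m) × Equiv.Perm (Fin n))) :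
    tracelessAct hidem hrange hker r = P * groupAct N m n r := rfl

theorem setOf_mul_cent_eq_range (hN : N ≠ 0) :
    {y | ∃ c ∈ Cent N m n, y = P * c} = Set.range (tracelessAct hidem hrange hker) := by
  ext y
  constructor
  · rintro ⟨c, hc, rfl⟩
    obtain ⟨r, rfl⟩ := exists_eq_transposedOp_of_mem_cent hc
    exact ⟨wallPart r, (mul_transposedOp_factorPermAlg hN hker r).symm⟩
  · rintro ⟨r, rfl⟩
    exact ⟨groupAct N m n r, groupAct_mem_cent r, rfl⟩

theorem tracelessAct_injective_iff (hN : N ≠ 0) :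
    Function.Injective (tracelessAct hidem hrange hker) ↔ m + n ≤ N := by
  constructor
  · intro hinj
    by_contra! hlt
    have hzero : tracelessAct hidem hrange hker (wallPart (alternator ℂ _)) = 0 := by
      rw [tracelessAct_apply, ← mul_transposedOp_factorPermAlg hN hker,
        factorPermAlg_alternator (by simpa using hlt), map_zero, mul_zero]
    exact wallPart_alternator_ne_zero ((map_eq_zero_iff _ hinj).1 hzero)
  · exact fun h => (injective_iff_map_eq_zero _).2 fun r =>
      eq_zero_of_mul_groupAct_eq_zero h hidem hrange (commute_groupAct hidem hrange hker r)

end Projector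

end MixedTensors

end Mixed

/-- the ideal 𝒫_{m,n}·C_{m,n}(N) of the centraliser algebra is
isomorphic as an algebra to the group algebra ℂ[𝔖_m × 𝔖_n] — i.e. there is a
ℂ-linear map which restricts to a multiplicative bijection from 𝒫_{m,n}·C_{m,n}(N)
onto ℂ[𝔖_m × 𝔖_n] — if and only if N ≥ m + n. -/
theorem PC_iso_group_algebra_iff (N m n : ℕ) (hm : 1 ≤ m) (hn : 1 ≤ n) (hN : 1 ≤ N)
    (P : Module.End ℂ (Tens N m n))
    (hidem : IsIdempotentElem P)
    (hrange : LinearMap.range P = Mixed.traceless0 N m n)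
    (hker : LinearMap.ker P = Mixed.traceSpan0 N m n) :
    (∃ φ : Module.End ℂ (Tens N m n) →ₗ[ℂ]
        MonoidAlgebra ℂ (Equiv.Perm (Fin m) × Equiv.Perm (Fin n)),
      (∀ x y : Module.End ℂ (Tens N m n),
        x ∈ {y | ∃ c ∈ Mixed.Cent N m n, y = P * c} →
        y ∈ {y | ∃ c ∈ Mixed.Cent N m n, y = P * c} →
        φ (x * y) = φ x * φ y) ∧
      Set.BijOn φ {y | ∃ c ∈ Mixed.Cent N m n, y = P * c} Set.univ) ↔
    m + n ≤ N := by
  have hN₀ : N ≠ 0 := Nat.one_le_iff_ne_zero.1 hN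
  rw [Mixed.setOf_mul_cent_eq_range hidem hrange hker hN₀,
    Mixed.exists_bijOn_range_iff_injective, Mixed.tracelessAct_injective_iff hidem hrange hker hN₀]
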